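/- For every m >= 3, the 2m-dimensional Lebesgue volume of Q(C_m) equals one quarter of the (2m-1)-dimensional Lebesgue volume of Q(P_{m-1}). -/

import Mathlib

open MeasureTheory Filter

noncomputable section

/-- The standard relaxation `Q(G)` of the boolean quadric polytope of a graph `G`:
the set of points of `[0,1]^(V + E)` satisfying, for each edge `(i,j)`,
`0 ≤ y_{ij}`, `y_{ij} ≤ x_i`, `y_{ij} ≤ x_j` and `x_i + x_j ≤ 1 + y_{ij}`. -/
def QSet {V : Type*} (G : SimpleGraph V) : Set ((V → ℝ) × (↥G.edgeSet → ℝ)) :=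
  {p | (∀ i, p.1 i ∈ Set.Icc (0 : ℝ) 1) ∧ (∀ e, p.2 e ∈ Set.Icc (0 : ℝ) 1) ∧
    ∀ (i j : V) (h : G.Adj i j),
      0 ≤ p.2 ⟨s(i, j), (SimpleGraph.mem_edgeSet _).mpr h⟩ ∧
      p.2 ⟨s(i, j), (SimpleGraph.mem_edgeSet _).mpr h⟩ ≤ p.1 i ∧
      p.2 ⟨s(i, j), (SimpleGraph.mem_edgeSet _).mpr h⟩ ≤ p.1 j ∧
      p.1 i + p.1 j ≤ 1 + p.2 ⟨s(i, j), (SimpleGraph.mem_edgeSet _).mpr h⟩}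

/-- The path `P_m` with `m + 1` vertices and `m` edges. -/
def pathG (m : ℕ) : SimpleGraph (Fin (m + 1)) :=
  SimpleGraph.fromRel (fun i j => (i : ℕ) + 1 = (j : ℕ))

instance (m : ℕ) : DecidableRel (pathG m).Adj := fun i j =>
  decidable_of_iff _ (SimpleGraph.fromRel_adj _ i j).symm

/-- The cycle `C_m` with `m` vertices and (for `m ≥ 3`) `m` edges. -/
def cycleG (m : ℕ) : SimpleGraph (Fin m) :=
  SimpleGraph.fromRel (fun i j => ((i : ℕ) + 1) % m = (j : ℕ))

instance (m : ℕ) : DecidableRel (cycleG m).Adj := fun i j =>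
  decidable_of_iff _ (SimpleGraph.fromRel_adj _ i j).symm

/-!
For fixed `x` the slice of `Q(G)` is a box whose side along the edge `ij` has length
`min (x i) (x j) - max 0 (x i + x j - 1) = min (tent (x i)) (tent (x j)) / 2`. As the tent map
preserves Lebesgue measure on `[0,1]`, the volume of `Q(G)` is `2 ^ (-|E|)` times the integral over
the unit cube of `edgeWeight G x = ∏ ij ∈ E, min (x i) (x j)`.

On the cycle `C_m` this weight is homogeneous of degree `m` and invariant under rotation, so its
integral is `1 / 2` of that over the facet `x 0 = 1`. On this facet the weight is the volume of the
set of `t ∈ [0,1]^m`, one coordinate per edge of the cycle, that are bounded at each edge by the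
values of `x` at its ends. The incidence relation between the `m - 1` remaining vertices and the `m`
edges of `C_m` is that between the edges and the vertices of `P_{m-1}`. After `x ↦ 1 - x` the facet
integral becomes the volume of the fractional stable set polytope `x_a + t_b ≤ 1` of a bipartite
graph, and slicing along `t` instead of `x` gives the integral of the weight of `P_{m-1}`. The
factors `1 / 2` from homogeneity and from the extra edge make up the quarter.
-/

open Set
open scoped ENNReal

/-! ### Integration over regions fibred over a base -/

section Fibred

variable {α β : Type*} [MeasurableSpace α] [MeasurableSpace β] {μ : Measure α} {ν : Measure β}
  [SFinite ν] {A : Set α} {B : α → Set β}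

lemma setLIntegral_prod_fibred (hA : MeasurableSet A)
    (hAB : MeasurableSet {p : α × β | p.1 ∈ A ∧ p.2 ∈ B p.1}) {f : α × β → ℝ≥0∞}
    (hf : Measurable f) :
    ∫⁻ p in {p : α × β | p.1 ∈ A ∧ p.2 ∈ B p.1}, f p ∂μ.prod ν =
      ∫⁻ a in A, ∫⁻ b in B a, f (a, b) ∂ν ∂μ := by
  classical
  rw [← lintegral_indicator hAB, lintegral_prod _ (hf.indicator hAB).aemeasurable,
    ← lintegral_indicator hA]
  refine lintegral_congr fun a ↦ ?_
  by_cases ha : a ∈ A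
  · have hB : MeasurableSet (B a) := by
      simpa [ha] using measurable_prodMk_left (x := a) hAB
    simp [indicator_apply, ha, ← lintegral_indicator hB]
  · simp [ha]

lemma prod_apply_fibred (hA : MeasurableSet A)
    (hAB : MeasurableSet {p : α × β | p.1 ∈ A ∧ p.2 ∈ B p.1}) :
    μ.prod ν {p : α × β | p.1 ∈ A ∧ p.2 ∈ B p.1} = ∫⁻ a in A, ν (B a) ∂μ := by
  simpa using setLIntegral_prod_fibred (μ := μ) (ν := ν) hA hAB measurable_one

end Fibred

/-! ### Integration over the unit cube -/

section UnitCube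

variable {ι : Type*} [Fintype ι]

lemma volume_restrict_Icc_eq_pi (a b : ι → ℝ) :
    (volume : Measure (ι → ℝ)).restrict (Icc a b) =
      Measure.pi fun i ↦ volume.restrict (Icc (a i) (b i)) := by
  rw [← pi_univ_Icc, volume_pi, Measure.restrict_pi_pi]

lemma setLIntegral_unitCube_one_sub (f : (ι → ℝ) → ℝ≥0∞) :
    ∫⁻ x in Icc (0 : ι → ℝ) 1, f (1 - x) = ∫⁻ x in Icc (0 : ι → ℝ) 1, f x := by
  have h := (Measure.measurePreserving_sub_left volume (1 : ι → ℝ)).setLIntegral_comp_preimage_emb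
    (MeasurableEquiv.subLeft 1).measurableEmbedding f (Icc 0 1)
  rwa [preimage_const_sub_Icc, sub_self, sub_zero] at h

lemma setLIntegral_unitCube_comp {g : ℝ → ℝ}
    (hg : MeasurePreserving g (volume.restrict (Icc 0 1)) (volume.restrict (Icc 0 1)))
    {f : (ι → ℝ) → ℝ≥0∞} (hf : Measurable f) :
    ∫⁻ x in Icc (0 : ι → ℝ) 1, f (g ∘ x) = ∫⁻ x in Icc (0 : ι → ℝ) 1, f x := by
  rw [volume_restrict_Icc_eq_pi]
  exact (measurePreserving_pi _ _ fun _ ↦ hg).lintegral_comp hf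

lemma setLIntegral_Icc_const {s : ℝ} (hs : 0 < s) (f : (ι → ℝ) → ℝ≥0∞) :
    ∫⁻ x in Icc (0 : ι → ℝ) (fun _ ↦ s), f x =
      ENNReal.ofReal s ^ Fintype.card ι * ∫⁻ x in Icc (0 : ι → ℝ) 1, f (s • x) := by
  have hemb : MeasurableEmbedding (s • · : (ι → ℝ) → ι → ℝ) :=
    (MeasurableEquiv.smul₀ s hs.ne').measurableEmbedding
  have hpre : (s • · : (ι → ℝ) → ι → ℝ) ⁻¹' Icc 0 (fun _ ↦ s) = Icc 0 1 := by
    ext x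
    simp [Pi.le_def, hs, mul_nonneg_iff_of_pos_left, mul_le_iff_le_one_right]
  have h := hemb.lintegral_map (μ := volume.restrict (Icc 0 1)) f
  rw [← hpre, ← hemb.restrict_map, Measure.map_addHaar_smul _ hs.ne', Measure.restrict_smul,
    lintegral_smul_measure, smul_eq_mul, Module.finrank_fintype_fun_eq_card,
    abs_of_pos (by positivity), ENNReal.ofReal_inv_of_pos (by positivity),
    ENNReal.ofReal_pow hs.le, hpre] at h
  rw [← h, ENNReal.mul_inv_cancel_left (by simp [hs]) (by finiteness)]

end UnitCube

/-! ### Homogeneous functions on the unit cube -/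

lemma setLIntegral_unitInterval_ofReal_pow (n : ℕ) :
    ∫⁻ s in Icc (0 : ℝ) 1, ENNReal.ofReal s ^ n = (n + 1 : ℝ≥0∞)⁻¹ := by
  have hpow : ∀ s ∈ Icc (0 : ℝ) 1, ENNReal.ofReal s ^ n = ENNReal.ofReal (s ^ n) :=
    fun s hs ↦ (ENNReal.ofReal_pow hs.1 n).symm
  rw [setLIntegral_congr_fun measurableSet_Icc hpow, ← ofReal_integral_eq_lintegral_ofReal
      ((continuous_pow n).continuousOn.integrableOn_compact isCompact_Icc)
      ((ae_restrict_mem measurableSet_Icc).mono fun s hs ↦ pow_nonneg hs.1 n),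
    integral_Icc_eq_integral_Ioc, ← intervalIntegral.integral_of_le zero_le_one, integral_pow,
    one_pow, zero_pow n.succ_ne_zero, sub_zero, one_div, ENNReal.ofReal_inv_of_pos (by positivity)]
  norm_cast

section MaxAt

variable {ι : Type*}

/-- The cone of vectors whose `i`-th coordinate is maximal. As `i` varies, these cones cover the
space and overlap in null sets only. -/
def maxAt (i : ι) : Set (ι → ℝ) := {x | ∀ j, x j ≤ x i}

lemma measurableSet_maxAt [Countable ι] (i : ι) : MeasurableSet (maxAt i) := by
  unfold maxAt
  measurability

lemma iUnion_maxAt [Finite ι] [Nonempty ι] : ⋃ i : ι, maxAt i = univ :=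
  eq_univ_of_forall fun x ↦ mem_iUnion.2 (Finite.exists_max x)

variable [Fintype ι]

lemma volume_setOf_apply_eq_apply {i j : ι} (hij : i ≠ j) :
    volume {x : ι → ℝ | x i = x j} = 0 := by
  classical
  let W : Submodule ℝ (ι → ℝ) := LinearMap.eqLocus (LinearMap.proj i) (LinearMap.proj j)
  have hW : W ≠ ⊤ := fun h ↦ by
    have : (Pi.single i 1 : ι → ℝ) ∈ W := h ▸ Submodule.mem_top
    simp [W, hij.symm] at this
  exact Measure.addHaar_submodule volume W hW

lemma lintegral_eq_sum_maxAt [Nonempty ι] {μ : Measure (ι → ℝ)} (hμ : μ ≪ volume)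
    (f : (ι → ℝ) → ℝ≥0∞) : ∫⁻ x, f x ∂μ = ∑ i, ∫⁻ x in maxAt i, f x ∂μ := by
  have hdisj : Pairwise (Function.onFun (AEDisjoint μ) (maxAt (ι := ι))) := fun i j hij ↦
    measure_mono_null (fun x hx ↦ le_antisymm (hx.2 i) (hx.1 j))
      (hμ (volume_setOf_apply_eq_apply hij))
  rw [← setLIntegral_univ, ← iUnion_maxAt,
    lintegral_iUnion₀ (fun i ↦ (measurableSet_maxAt i).nullMeasurableSet) hdisj, tsum_fintype]

lemma setLIntegral_unitCube_inter_maxAt_perm (e : Equiv.Perm ι) {f : (ι → ℝ) → ℝ≥0∞}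
    (hf : ∀ x, f (x ∘ e) = f x) (i : ι) :
    ∫⁻ x in Icc 0 1 ∩ maxAt (e i), f x = ∫⁻ x in Icc 0 1 ∩ maxAt i, f x := by
  have hE : (· ∘ e) = MeasurableEquiv.piCongrLeft (fun _ ↦ ℝ) e.symm := by
    ext x j
    simpa using (MeasurableEquiv.piCongrLeft_apply_apply (β := fun _ ↦ ℝ) e.symm x (e j)).symm
  have hemb : MeasurableEmbedding (· ∘ e : (ι → ℝ) → ι → ℝ) :=
    hE ▸ MeasurableEquiv.measurableEmbedding _
  have hmp : MeasurePreserving (· ∘ e : (ι → ℝ) → ι → ℝ) :=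
    hE ▸ volume_measurePreserving_piCongrLeft (fun _ ↦ ℝ) e.symm
  have hpre : (· ∘ e) ⁻¹' (Icc (0 : ι → ℝ) 1 ∩ maxAt i) = Icc 0 1 ∩ maxAt (e i) := by
    ext x
    simp [maxAt, Pi.le_def, e.forall_congr_right (q := fun j ↦ 0 ≤ x j),
      e.forall_congr_right (q := fun j ↦ x j ≤ 1),
      e.forall_congr_right (q := fun j ↦ x j ≤ x (e i))]
  simpa only [hpre, hf] using hmp.setLIntegral_comp_preimage_emb hemb f (Icc 0 1 ∩ maxAt i)

end MaxAt

section Homogeneous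

variable {n d : ℕ} {f : (Fin (n + 1) → ℝ) → ℝ≥0∞}

lemma finCons_eq_piFinSuccAbove_symm :
    (fun p : ℝ × (Fin n → ℝ) ↦ (Fin.cons p.1 p.2 : Fin (n + 1) → ℝ)) =
      (MeasurableEquiv.piFinSuccAbove (fun _ ↦ ℝ) 0).symm :=
  funext fun p ↦ (Fin.insertNth_zero' p.1 p.2).symm

lemma measurableEmbedding_finCons :
    MeasurableEmbedding fun p : ℝ × (Fin n → ℝ) ↦ (Fin.cons p.1 p.2 : Fin (n + 1) → ℝ) :=
  finCons_eq_piFinSuccAbove_symm ▸ MeasurableEquiv.measurableEmbedding _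

lemma measurePreserving_finCons :
    MeasurePreserving fun p : ℝ × (Fin n → ℝ) ↦ (Fin.cons p.1 p.2 : Fin (n + 1) → ℝ) :=
  finCons_eq_piFinSuccAbove_symm ▸ (volume_preserving_piFinSuccAbove (fun _ ↦ ℝ) 0).symm _

lemma cons_mem_unitCube_inter_maxAt_zero {s : ℝ} {v : Fin n → ℝ} :
    (Fin.cons s v : Fin (n + 1) → ℝ) ∈ Icc 0 1 ∩ maxAt 0 ↔
      s ∈ Icc 0 1 ∧ v ∈ Icc 0 (fun _ ↦ s) := by
  simp only [maxAt, mem_inter_iff, mem_Icc, mem_ofPred_eq, Pi.le_def, Fin.forall_fin_succ,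
    Fin.cons_zero, Fin.cons_succ, Pi.zero_apply, Pi.one_apply, le_refl, true_and]
  constructor
  · rintro ⟨⟨⟨hs, hv⟩, hs', -⟩, hvs⟩
    exact ⟨⟨hs, hs'⟩, hv, hvs⟩
  · rintro ⟨⟨hs, hs'⟩, hv, hvs⟩
    exact ⟨⟨⟨hs, hv⟩, hs', fun j ↦ (hvs j).trans hs'⟩, hvs⟩

lemma setLIntegral_unitCube_inter_maxAt_zero (hf : Measurable f) :
    ∫⁻ x in Icc 0 1 ∩ maxAt 0, f x =
      ∫⁻ s in Icc (0 : ℝ) 1, ∫⁻ v in Icc (0 : Fin n → ℝ) (fun _ ↦ s), f (Fin.cons s v) := by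
  have hpre : (fun p : ℝ × (Fin n → ℝ) ↦ (Fin.cons p.1 p.2 : Fin (n + 1) → ℝ)) ⁻¹'
      (Icc 0 1 ∩ maxAt 0) = {p | p.1 ∈ Icc 0 1 ∧ p.2 ∈ Icc 0 (fun _ ↦ p.1)} :=
    Set.ext fun _ ↦ cons_mem_unitCube_inter_maxAt_zero
  have hmeas : MeasurableSet {p : ℝ × (Fin n → ℝ) | p.1 ∈ Icc 0 1 ∧ p.2 ∈ Icc 0 (fun _ ↦ p.1)} :=
    hpre ▸ measurableEmbedding_finCons.measurable (measurableSet_Icc.inter (measurableSet_maxAt 0))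
  rw [← measurePreserving_finCons.setLIntegral_comp_preimage_emb measurableEmbedding_finCons, hpre]
  exact setLIntegral_prod_fibred (B := fun s ↦ Icc 0 (fun _ ↦ s)) measurableSet_Icc hmeas
    (hf.comp measurableEmbedding_finCons.measurable)

lemma setLIntegral_unitCube_inter_maxAt_zero_of_homogeneous (hf : Measurable f)
    (hom : ∀ s : ℝ, 0 < s → ∀ x, f (s • x) = ENNReal.ofReal s ^ d * f x) :
    ∫⁻ x in Icc 0 1 ∩ maxAt 0, f x =
      (n + d + 1 : ℝ≥0∞)⁻¹ * ∫⁻ v in Icc (0 : Fin n → ℝ) 1, f (Fin.cons 1 v) := by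
  rw [setLIntegral_unitCube_inter_maxAt_zero hf, ← Nat.cast_add,
    ← setLIntegral_unitInterval_ofReal_pow, ← lintegral_mul_const _ (by fun_prop),
    ← restrict_Ioc_eq_restrict_Icc]
  refine setLIntegral_congr_fun measurableSet_Ioc fun s hs ↦ ?_
  have hcons (v : Fin n → ℝ) : (Fin.cons s (s • v) : Fin (n + 1) → ℝ) = s • Fin.cons 1 v := by
    ext j; cases j using Fin.cases <;> simp
  have hmeas : Measurable fun v : Fin n → ℝ ↦ f (Fin.cons 1 v) :=
    hf.comp (measurableEmbedding_finCons.measurable.comp measurable_prodMk_left)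
  rw [setLIntegral_Icc_const hs.1, Fintype.card_fin]
  simp only [hcons, hom s hs.1]
  rw [lintegral_const_mul _ hmeas, ← mul_assoc, ← pow_add]

lemma setLIntegral_unitCube_of_homogeneous (hf : Measurable f)
    (hom : ∀ s : ℝ, 0 < s → ∀ x, f (s • x) = ENNReal.ofReal s ^ d * f x)
    (hsymm : ∀ i, ∃ e : Equiv.Perm (Fin (n + 1)), e 0 = i ∧ ∀ x, f (x ∘ e) = f x) :
    ∫⁻ x in Icc 0 1, f x =
      (n + 1) / (n + d + 1) * ∫⁻ v in Icc (0 : Fin n → ℝ) 1, f (Fin.cons 1 v) := by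
  have hmax (i) : ∫⁻ x in maxAt i, f x ∂volume.restrict (Icc 0 1) =
      (n + d + 1 : ℝ≥0∞)⁻¹ * ∫⁻ v in Icc (0 : Fin n → ℝ) 1, f (Fin.cons 1 v) := by
    obtain ⟨e, rfl, he⟩ := hsymm i
    rw [Measure.restrict_restrict (measurableSet_maxAt _), inter_comm,
      setLIntegral_unitCube_inter_maxAt_perm e he,
      setLIntegral_unitCube_inter_maxAt_zero_of_homogeneous hf hom]
  rw [lintegral_eq_sum_maxAt Measure.restrict_le_self.absolutelyContinuous]
  simp [hmax, div_eq_mul_inv, mul_assoc]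

end Homogeneous

/-! ### Bipartite duality -/

section BipartiteDuality

variable {α β : Type*} {R : α → β → Prop}

/-- The fractional stable set polytope of the bipartite graph whose sides are `α` and `β` and whose
edges are the pairs related by `R`. -/
def stableSetPolytope (R : α → β → Prop) : Set ((α → ℝ) × (β → ℝ)) :=
  {p | p.1 ∈ Icc 0 1 ∧ p.2 ∈ Icc 0 1 ∧ ∀ a b, R a b → p.1 a + p.2 b ≤ 1}

lemma measurableSet_stableSetPolytope [Countable α] [Countable β] :
    MeasurableSet (stableSetPolytope R) := by
  unfold stableSetPolytope
  measurability

variable [Fintype α] [Fintype β]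

lemma volume_stableSetPolytope_flip :
    volume (stableSetPolytope (flip R)) = volume (stableSetPolytope R) := by
  have hswap : stableSetPolytope (flip R) = Prod.swap ⁻¹' stableSetPolytope R := by
    ext p
    simp only [stableSetPolytope, flip, mem_preimage, mem_ofPred_eq, Prod.fst_swap, Prod.snd_swap]
    rw [and_left_comm, forall_comm]
    simp only [add_comm]
  rw [hswap]
  exact Measure.measurePreserving_swap.measure_preimage
    measurableSet_stableSetPolytope.nullMeasurableSet

lemma volume_stableSetPolytope :
    volume (stableSetPolytope R) = ∫⁻ u in Icc (0 : α → ℝ) 1,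
      ∏ b, volume {t ∈ Icc (0 : ℝ) 1 | ∀ a, R a b → t ≤ u a} := by
  have hslice (u : α → ℝ) : {t ∈ Icc (0 : β → ℝ) 1 | ∀ a b, R a b → u a + t b ≤ 1} =
      univ.pi fun b ↦ {t ∈ Icc (0 : ℝ) 1 | ∀ a, R a b → t ≤ (1 - u) a} := by
    ext t
    simp only [mem_Icc, Pi.le_def, Pi.zero_apply, Pi.one_apply, mem_ofPred_eq, Pi.sub_apply,
      le_sub_iff_add_le', Set.mem_pi, mem_univ, forall_const]
    grind
  rw [← setLIntegral_unitCube_one_sub]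
  simp only [← volume_pi_pi, ← hslice]
  exact prod_apply_fibred
    (B := fun u : α → ℝ ↦ {t ∈ Icc (0 : β → ℝ) 1 | ∀ a b, R a b → u a + t b ≤ 1})
    measurableSet_Icc measurableSet_stableSetPolytope

lemma setLIntegral_prod_volume_comm :
    ∫⁻ u in Icc (0 : α → ℝ) 1, ∏ b, volume {t ∈ Icc (0 : ℝ) 1 | ∀ a, R a b → t ≤ u a} =
      ∫⁻ t in Icc (0 : β → ℝ) 1, ∏ a, volume {s ∈ Icc (0 : ℝ) 1 | ∀ b, R a b → s ≤ t b} := by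
  rw [← volume_stableSetPolytope, ← volume_stableSetPolytope_flip, volume_stableSetPolytope]
  rfl

end BipartiteDuality

/-! ### The tent map -/

/-- The tent map of slope `2`; it preserves Lebesgue measure on `[0,1]`. -/
def tent (x : ℝ) : ℝ := 2 * min x (1 - x)

lemma measurable_tent : Measurable tent := by unfold tent; fun_prop

lemma measurePreserving_tent :
    MeasurePreserving tent (volume.restrict (Icc 0 1)) (volume.restrict (Icc 0 1)) := by
  refine ⟨measurable_tent, ?_⟩
  have : IsFiniteMeasure (Measure.map tent (volume.restrict (Icc 0 1))) :=
    Measure.isFiniteMeasure_map _ _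
  refine Measure.ext_of_Ici _ _ fun a ↦ ?_
  have hpre : tent ⁻¹' Ici a ∩ Icc 0 1 = Icc (max a 0 / 2) (1 - max a 0 / 2) := by
    ext x
    simp only [tent, mem_inter_iff, mem_preimage, mem_Ici, mem_Icc]
    grind
  have hIci : Ici a ∩ Icc 0 1 = Icc (max a 0) 1 := by
    ext x
    simp only [mem_inter_iff, mem_Ici, mem_Icc]
    grind
  rw [Measure.map_apply measurable_tent measurableSet_Ici,
    Measure.restrict_apply (measurable_tent measurableSet_Ici),
    Measure.restrict_apply measurableSet_Ici, hpre, hIci, Real.volume_Icc, Real.volume_Icc]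
  ring_nf

lemma min_sub_max_eq_min_tent_div_two (p q : ℝ) :
    min p q - max 0 (p + q - 1) = min (tent p) (tent q) / 2 := by
  unfold tent
  grind

/-! ### The volume of `Q(G)` -/

section Graph

variable {V : Type*} {G : SimpleGraph V}

lemma mem_QSet_iff {p : (V → ℝ) × (G.edgeSet → ℝ)} :
    p ∈ QSet G ↔ p.1 ∈ Icc 0 1 ∧ p.2 ∈ univ.pi fun e : G.edgeSet ↦
      Icc (max 0 ((Sym2.map p.1 e).inf + (Sym2.map p.1 e).sup - 1)) (Sym2.map p.1 e).inf := by
  have hedge (i j : V) (y : ℝ) :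
      y ∈ Icc (max 0 ((Sym2.map p.1 s(i, j)).inf + (Sym2.map p.1 s(i, j)).sup - 1))
        (Sym2.map p.1 s(i, j)).inf ↔
      0 ≤ y ∧ y ≤ p.1 i ∧ y ≤ p.1 j ∧ p.1 i + p.1 j ≤ 1 + y := by
    simp only [Sym2.map_mk, Sym2.inf_mk, Sym2.sup_mk, min_add_max, mem_Icc, max_le_iff, le_min_iff]
    grind
  constructor
  · rintro ⟨hx, -, hE⟩
    refine ⟨⟨fun i ↦ (hx i).1, fun i ↦ (hx i).2⟩, ?_⟩
    rintro ⟨⟨i, j⟩, he⟩ -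
    exact (hedge i j _).2 (hE i j he)
  · rintro ⟨hx, hy⟩
    have hE (i j : V) (h : G.Adj i j) := (hedge i j _).1 (hy ⟨s(i, j), h⟩ (mem_univ _))
    refine ⟨fun i ↦ ⟨hx.1 i, hx.2 i⟩, ?_, hE⟩
    rintro ⟨⟨i, j⟩, he⟩
    exact ⟨(hE i j he).1, (hE i j he).2.1.trans (hx.2 i)⟩

lemma measurable_inf_map (e : Sym2 V) : Measurable fun x : V → ℝ ↦ (Sym2.map x e).inf := by
  induction e with | _ i j => simpa using (measurable_pi_apply i).min (measurable_pi_apply j)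

lemma measurableSet_QSet [Countable V] : MeasurableSet (QSet G) := by
  unfold QSet
  measurability

variable [Fintype G.edgeSet]

variable (G) in
/-- The product over the edges `ij` of `G` of `min (x i) (x j)`. Its integral over the unit
cube is `2 ^ |E|` times the volume of `Q(G)`. -/
def edgeWeight (x : V → ℝ) : ℝ≥0∞ :=
  ∏ e : G.edgeSet, ENNReal.ofReal (Sym2.map x e).inf

lemma measurable_edgeWeight : Measurable (edgeWeight G) :=
  Finset.measurable_prod _ fun e _ ↦ (measurable_inf_map e.1).ennreal_ofReal

lemma edgeWeight_smul {s : ℝ} (hs : 0 ≤ s) (x : V → ℝ) :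
    edgeWeight G (s • x) = ENNReal.ofReal s ^ Fintype.card G.edgeSet * edgeWeight G x := by
  have hinf (e : Sym2 V) : (Sym2.map (s • x) e).inf = s * (Sym2.map x e).inf := by
    induction e with | _ i j => simp [mul_min_of_nonneg _ _ hs]
  simp only [edgeWeight, hinf, ENNReal.ofReal_mul hs, Finset.prod_mul_distrib, Finset.prod_const,
    Finset.card_univ]

lemma volume_QSet [Fintype V] :
    volume (QSet G) = 2⁻¹ ^ Fintype.card G.edgeSet * ∫⁻ x in Icc (0 : V → ℝ) 1, edgeWeight G x := by
  have hlen (x : V → ℝ) (e : Sym2 V) : (Sym2.map x e).inf -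
      max 0 ((Sym2.map x e).inf + (Sym2.map x e).sup - 1) = 2⁻¹ * (Sym2.map (tent ∘ x) e).inf := by
    induction e with | _ i j =>
      simp [min_add_max, min_sub_max_eq_min_tent_div_two, div_eq_inv_mul]
  have hQ : QSet G = {p | p.1 ∈ Icc 0 1 ∧ p.2 ∈ univ.pi fun e : G.edgeSet ↦
      Icc (max 0 ((Sym2.map p.1 e).inf + (Sym2.map p.1 e).sup - 1)) (Sym2.map p.1 e).inf} :=
    Set.ext fun _ ↦ mem_QSet_iff
  rw [← lintegral_const_mul _ measurable_edgeWeight,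
    ← setLIntegral_unitCube_comp measurePreserving_tent (measurable_edgeWeight.const_mul _)]
  rw [hQ]
  refine (prod_apply_fibred (B := fun x : V → ℝ ↦ univ.pi fun e : G.edgeSet ↦
      Icc (max 0 ((Sym2.map x e).inf + (Sym2.map x e).sup - 1)) (Sym2.map x e).inf)
    measurableSet_Icc (hQ ▸ measurableSet_QSet)).trans (lintegral_congr fun x ↦ ?_)
  simp only [volume_pi_pi, Real.volume_Icc, hlen]
  simp [edgeWeight, ENNReal.ofReal_mul, ENNReal.ofReal_inv_of_pos, Finset.prod_mul_distrib]

end Graph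

/-! ### Paths and cycles -/

section Path

variable {n : ℕ}

lemma pathG_adj {i j : Fin (n + 1)} :
    (pathG n).Adj i j ↔ (i : ℕ) + 1 = j ∨ (j : ℕ) + 1 = i := by
  simp only [pathG, SimpleGraph.fromRel_adj, ne_eq, Fin.ext_iff]
  omega

/-- The edges of the path are the pairs of consecutive vertices, indexed by their first vertex. -/
def pathEdge (i : Fin n) : (pathG n).edgeSet :=
  ⟨s(i.castSucc, i.succ), pathG_adj.2 (.inl (by simp))⟩

lemma pathEdge_bijective : Function.Bijective (pathEdge (n := n)) := by
  constructor
  · intro i j h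
    have h := Sym2.eq_iff.1 (congrArg Subtype.val h)
    simp only [Fin.ext_iff, Fin.val_castSucc, Fin.val_succ] at h ⊢
    omega
  · rintro ⟨⟨i, j⟩, he⟩
    rcases pathG_adj.1 he with h | h
    · exact ⟨⟨i, Nat.lt_of_succ_lt_succ (h.trans_lt j.isLt)⟩,
        Subtype.ext (Sym2.eq_iff.2 (.inl ⟨rfl, Fin.ext h⟩))⟩
    · exact ⟨⟨j, Nat.lt_of_succ_lt_succ (h.trans_lt i.isLt)⟩,
        Subtype.ext (Sym2.eq_iff.2 (.inr ⟨rfl, Fin.ext h⟩))⟩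

lemma card_edgeSet_pathG [Fintype (pathG n).edgeSet] : Fintype.card (pathG n).edgeSet = n := by
  rw [← Fintype.card_of_bijective pathEdge_bijective, Fintype.card_fin]

lemma edgeWeight_pathG [Fintype (pathG n).edgeSet] (x : Fin (n + 1) → ℝ) :
    edgeWeight (pathG n) x = ∏ i : Fin n, ENNReal.ofReal (min (x i.castSucc) (x i.succ)) :=
  (Fintype.prod_bijective pathEdge pathEdge_bijective _ _ fun _ ↦ rfl).symm

end Path

section Cycle

variable {n : ℕ}

lemma cycleG_adj {i j : Fin (n + 1)} :
    (cycleG (n + 1)).Adj i j ↔ i ≠ j ∧ (i + 1 = j ∨ j + 1 = i) := by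
  simp [cycleG, Fin.ext_iff, Fin.val_add]

/-- The edges of the cycle are the pairs of cyclically consecutive vertices, indexed by their first
vertex. -/
def cycleEdge (hn : 2 ≤ n) (i : Fin (n + 1)) : (cycleG (n + 1)).edgeSet :=
  ⟨s(i, i + 1), cycleG_adj.2 ⟨by simp [show n ≠ 0 by omega], .inl rfl⟩⟩

lemma cycleEdge_bijective (hn : 2 ≤ n) : Function.Bijective (cycleEdge hn) := by
  constructor
  · intro i j h
    rcases Sym2.eq_iff.1 (congrArg Subtype.val h) with ⟨h, -⟩ | ⟨h, h'⟩
    · exact h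
    · exfalso
      rw [h, add_assoc, add_eq_left, Fin.ext_iff] at h'
      simp [Fin.val_add, Nat.mod_eq_of_lt, show 1 < n + 1 by omega, show 2 < n + 1 by omega] at h'
  · rintro ⟨⟨i, j⟩, he⟩
    rcases (cycleG_adj.1 he).2 with h | h
    · exact ⟨i, Subtype.ext (Sym2.eq_iff.2 (.inl ⟨rfl, h⟩))⟩
    · exact ⟨j, Subtype.ext (Sym2.eq_iff.2 (.inr ⟨rfl, h⟩))⟩

lemma card_edgeSet_cycleG (hn : 2 ≤ n) [Fintype (cycleG (n + 1)).edgeSet] :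
    Fintype.card (cycleG (n + 1)).edgeSet = n + 1 := by
  rw [← Fintype.card_of_bijective (cycleEdge_bijective hn), Fintype.card_fin]

lemma edgeWeight_cycleG (hn : 2 ≤ n) [Fintype (cycleG (n + 1)).edgeSet] (x : Fin (n + 1) → ℝ) :
    edgeWeight (cycleG (n + 1)) x = ∏ i, ENNReal.ofReal (min (x i) (x (i + 1))) :=
  (Fintype.prod_bijective (cycleEdge hn) (cycleEdge_bijective hn) _ _ fun _ ↦ rfl).symm

lemma edgeWeight_cycleG_rotate (hn : 2 ≤ n) [Fintype (cycleG (n + 1)).edgeSet] (i : Fin (n + 1))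
    (x : Fin (n + 1) → ℝ) :
    edgeWeight (cycleG (n + 1)) (x ∘ Equiv.addRight i) = edgeWeight (cycleG (n + 1)) x := by
  rw [edgeWeight_cycleG hn, edgeWeight_cycleG hn]
  exact Fintype.prod_equiv (Equiv.addRight i) _ _ fun j ↦ by simp [add_right_comm]

lemma setLIntegral_edgeWeight_cycleG (hn : 2 ≤ n) [Fintype (cycleG (n + 1)).edgeSet] :
    ∫⁻ x in Icc (0 : Fin (n + 1) → ℝ) 1, edgeWeight (cycleG (n + 1)) x =
      2⁻¹ * ∫⁻ v in Icc (0 : Fin n → ℝ) 1, edgeWeight (cycleG (n + 1)) (Fin.cons 1 v) := by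
  have hom (s : ℝ) (hs : 0 < s) (x : Fin (n + 1) → ℝ) := by
    simpa only [card_edgeSet_cycleG hn] using edgeWeight_smul (G := cycleG (n + 1)) hs.le x
  rw [setLIntegral_unitCube_of_homogeneous measurable_edgeWeight hom fun i ↦
    ⟨Equiv.addRight i, by simp, edgeWeight_cycleG_rotate hn i⟩]
  congr 1
  have : ((n : ℝ≥0∞) + (n + 1 : ℕ) + 1) = 2 * (n + 1) := by push_cast; ring
  rw [this, ENNReal.div_eq_inv_mul, ENNReal.mul_inv (by simp) (by simp), mul_assoc,
    ENNReal.inv_mul_cancel (by simp) (by finiteness), mul_one]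

end Cycle

section Duality

variable {k : ℕ}

/-- Edge `b` of the cycle on `k + 2` vertices, which joins `b` and `b + 1`, is incident to the
vertex `a.succ`. Equally, `b` is an end of edge `a` of the path on `k + 2` vertices. -/
def PathIncident (a : Fin (k + 1)) (b : Fin (k + 2)) : Prop := b = a.castSucc ∨ b = a.succ

lemma volume_unitInterval_inter_Iic {r : ℝ} (hr : r ≤ 1) :
    volume {s ∈ Icc (0 : ℝ) 1 | s ≤ r} = ENNReal.ofReal r := by
  have h : {s ∈ Icc (0 : ℝ) 1 | s ≤ r} = Icc 0 r := by
    ext s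
    simp only [mem_ofPred_eq, mem_Icc]
    grind
  rw [h, Real.volume_Icc, sub_zero]

lemma edgeWeight_pathG_eq_prod_volume [Fintype (pathG (k + 1)).edgeSet] {t : Fin (k + 2) → ℝ}
    (ht : t ≤ 1) :
    edgeWeight (pathG (k + 1)) t =
      ∏ a, volume {s ∈ Icc (0 : ℝ) 1 | ∀ b, PathIncident a b → s ≤ t b} := by
  rw [edgeWeight_pathG]
  refine Finset.prod_congr rfl fun a _ ↦ ?_
  rw [← volume_unitInterval_inter_Iic (min_le_of_left_le (ht _))]
  simp [PathIncident]

lemma edgeWeight_cycleG_cons_one [Fintype (cycleG (k + 2)).edgeSet] (hk : 1 ≤ k)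
    {v : Fin (k + 1) → ℝ} (hv : v ≤ 1) :
    edgeWeight (cycleG (k + 2)) (Fin.cons 1 v) =
      ∏ b, volume {t ∈ Icc (0 : ℝ) 1 | ∀ a, PathIncident a b → t ≤ v a} := by
  have hle (c : Fin (k + 2)) : (Fin.cons 1 v : Fin (k + 2) → ℝ) c ≤ 1 := by
    cases c using Fin.cases
    · simp
    · simpa using hv _
  have hcons {t : ℝ} (ht : t ≤ 1) (c : Fin (k + 2)) :
      t ≤ (Fin.cons 1 v : Fin (k + 2) → ℝ) c ↔ ∀ a, c = a.succ → t ≤ v a := by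
    cases c using Fin.cases <;> simp [ht, (Fin.succ_ne_zero _).symm]
  rw [edgeWeight_cycleG (by omega)]
  refine Finset.prod_congr rfl fun b _ ↦ ?_
  rw [← volume_unitInterval_inter_Iic (min_le_of_left_le (hle b))]
  congr 1
  ext t
  refine and_congr_right fun ht ↦ ?_
  rw [le_min_iff, hcons ht.2, hcons ht.2, ← forall_and]
  simp [PathIncident, ← Fin.coeSucc_eq_succ, or_imp, and_comm]

lemma setLIntegral_edgeWeight_cycleG_cons_one [Fintype (pathG (k + 1)).edgeSet]
    [Fintype (cycleG (k + 2)).edgeSet] (hk : 1 ≤ k) :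
    ∫⁻ v in Icc (0 : Fin (k + 1) → ℝ) 1, edgeWeight (cycleG (k + 2)) (Fin.cons 1 v) =
      ∫⁻ t in Icc (0 : Fin (k + 2) → ℝ) 1, edgeWeight (pathG (k + 1)) t := by
  rw [setLIntegral_congr_fun measurableSet_Icc fun v hv ↦ edgeWeight_cycleG_cons_one hk hv.2,
    setLIntegral_congr_fun measurableSet_Icc fun t ht ↦ edgeWeight_pathG_eq_prod_volume ht.2]
  exact setLIntegral_prod_volume_comm

end Duality

/-- `vol Q(C_m) = vol Q(P_{m-1}) / 4`. -/
theorem volume_QSet_cycle_eq_quarter_path (m : ℕ) (hm : 3 ≤ m) :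
    volume (QSet (cycleG m)) = volume (QSet (pathG (m - 1))) / 4 := by
  classical
  obtain ⟨k, rfl⟩ := Nat.exists_eq_add_of_le' (show 2 ≤ m by omega)
  have hk : 1 ≤ k := by omega
  have hquarter : (2⁻¹ * 2⁻¹ : ℝ≥0∞) = 4⁻¹ := by
    rw [← ENNReal.mul_inv (by simp) (by simp)]; norm_num
  rw [show k + 2 - 1 = k + 1 by omega, volume_QSet, volume_QSet,
    card_edgeSet_cycleG (by omega), card_edgeSet_pathG, setLIntegral_edgeWeight_cycleG (by omega),
    setLIntegral_edgeWeight_cycleG_cons_one hk, div_eq_mul_inv, ← hquarter, pow_succ]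
  ring
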